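/- The ℤ-span in ℂ² of {e₁, λ₁+e₂, λ₂+e₂, 2e₂} = {(1,0), (ζ,1), (0,1+ζ), (0,2)} equals the ℤ-span of {(1,0), (2ζ,0), (ζ,1), (ζ²,ζ)}; that is, Λ_A = Γ_{2ζ}·(1,0) ⊕ Γ_ζ·(ζ,1), where Γ_{2ζ} = ℤ + ℤ·2ζ and Γ_ζ = ℤ + ℤζ. In particular A = ℂ²/Λ_A is isomorphic to the product of elliptic curves E'' × E' with E'' = ℂ/Γ_{2ζ} and E' = ℂ/Γ_ζ. -/

import Mathlib

noncomputable section

/-- ζ = (1 + √3·i)/2, a primitive sixth root of unity. -/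
def ζ : ℂ := (1 + (Real.sqrt 3 : ℂ) * Complex.I) / 2

/-- The lattice Λ_A = ℤ𝐞₁ ⊕ ℤ𝐞₂ ⊕ ℤ𝐞₃ ⊕ ℤ𝐞₄ with
𝐞₁ = (1,0), 𝐞₂ = (ζ,1), 𝐞₃ = (0,1+ζ), 𝐞₄ = (0,2). -/
def ΛA : Set (ℂ × ℂ) :=
  {v | ∃ a b c d : ℤ, v = (a : ℂ) • ((1 : ℂ), (0 : ℂ)) + (b : ℂ) • (ζ, (1 : ℂ))
    + (c : ℂ) • ((0 : ℂ), 1 + ζ) + (d : ℂ) • ((0 : ℂ), (2 : ℂ))}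

/-- Γ_{2ζ} = ℤ + ℤ·2ζ ⊂ ℂ. -/
def Γ2ζ : Set ℂ := {z | ∃ a b : ℤ, z = (a : ℂ) + (b : ℂ) * (2 * ζ)}

/-- Γ_ζ = ℤ + ℤ·ζ ⊂ ℂ. -/
def Γζ : Set ℂ := {z | ∃ a b : ℤ, z = (a : ℂ) + (b : ℂ) * ζ}

/-!
Write `e₁, e₂` for the standard basis and `f = ζ • e₁ + e₂`. From `ζ ^ 2 = ζ - 1` one gets
`(1 + ζ) • e₂ = e₁ - (2 * ζ) • e₁ + f + ζ • f` and `2 • e₂ = 2 • f - (2 * ζ) • e₁`, so the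
generators of `Λ_A` and `e₁, (2 * ζ) • e₁, f, ζ • f` differ by an integral unimodular substitution.
The sum is direct because `(e₁, f)` is again a basis, obtained from `(e₁, e₂)` by a transvection.
-/

open Submodule

section IntegralSpans

variable {R M : Type*} [Ring R] [AddCommGroup M] [Module R M]

variable (R) in
theorem coe_span_int_quadruple (w x y z : M) :
    (span ℤ {w, x, y, z} : Set M) =
      {v | ∃ a b c d : ℤ, v = (a : R) • w + (b : R) • x + (c : R) • y + (d : R) • z} := by
  ext v
  simp only [SetLike.mem_coe, mem_span_insert (s := {x, y, z}), mem_span_triple,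
    Int.cast_smul_eq_zsmul, Set.mem_ofPred_eq]
  constructor
  · rintro ⟨a, _, ⟨b, c, d, rfl⟩, rfl⟩
    exact ⟨a, b, c, d, by abel⟩
  · rintro ⟨a, b, c, d, rfl⟩
    exact ⟨a, _, ⟨b, c, d, rfl⟩, by abel⟩

theorem coe_span_int_one_pair (μ : R) :
    (span ℤ {1, μ} : Set R) = {z | ∃ a b : ℤ, z = (a : R) + (b : R) * μ} := by
  ext z
  simp only [SetLike.mem_coe, mem_span_pair, zsmul_eq_mul, mul_one, Set.mem_ofPred_eq, eq_comm]

theorem coe_span_int_smul_quadruple (μ ν : R) (x y : M) :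
    (span ℤ {x, μ • x, y, ν • y} : Set M) =
      {v | ∃ γ ∈ span ℤ {1, μ}, ∃ δ ∈ span ℤ {1, ν}, v = γ • x + δ • y} := by
  ext v
  simp only [coe_span_int_quadruple R, ← SetLike.mem_coe, coe_span_int_one_pair,
    Set.mem_ofPred_eq]
  constructor
  · rintro ⟨a, b, c, d, rfl⟩
    exact ⟨_, ⟨a, b, rfl⟩, _, ⟨c, d, rfl⟩, by simp only [add_smul, mul_smul, add_assoc]⟩
  · rintro ⟨_, ⟨a, b, rfl⟩, _, ⟨c, d, rfl⟩, rfl⟩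
    exact ⟨a, b, c, d, by simp only [add_smul, mul_smul, add_assoc]⟩

end IntegralSpans

theorem span_sub_add_add_smul_sub {R M : Type*} [Ring R] [AddCommGroup M] [Module R M]
    (c : R) (x x' y y' : M) :
    span R {x, y, x - x' + y + y', c • y - x'} = span R {x, x', y, y'} := by
  apply le_antisymm <;> rw [span_le] <;> simp only [Set.insert_subset_iff, Set.singleton_subset_iff]
  · set N := span R {x, x', y, y'}
    have hx : x ∈ N := mem_span_of_mem (by simp)
    have hx' : x' ∈ N := mem_span_of_mem (by simp)
    have hy : y ∈ N := mem_span_of_mem (by simp)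
    have hy' : y' ∈ N := mem_span_of_mem (by simp)
    exact ⟨hx, hy, N.add_mem (N.add_mem (N.sub_mem hx hx') hy) hy',
      N.sub_mem (N.smul_mem c hy) hx'⟩
  · set N := span R {x, y, x - x' + y + y', c • y - x'}
    have hx : x ∈ N := mem_span_of_mem (by simp)
    have hy : y ∈ N := mem_span_of_mem (by simp)
    have hu : x - x' + y + y' ∈ N := mem_span_of_mem (by simp)
    have ht : c • y - x' ∈ N := mem_span_of_mem (by simp)
    have hx' : x' ∈ N := by simpa using N.sub_mem (N.smul_mem c hy) ht
    have hy' : y' ∈ N := by simpa using N.sub_mem hu (N.add_mem (N.sub_mem hx hx') hy)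
    exact ⟨hx, hx', hy, hy'⟩

theorem linearIndependent_pair_smul_add {R M : Type*} [Ring R] [AddCommGroup M] [Module R M]
    {x y : M} (h : LinearIndependent R ![x, y]) (c : R) :
    LinearIndependent R ![x, c • x + y] := by
  refine LinearIndependent.pair_iff.mpr fun s t hst ↦ ?_
  have regrouped : (s + t * c) • x + t • y = 0 := by
    rw [← hst, add_smul, mul_smul, smul_add, add_assoc]
  obtain ⟨hs, rfl⟩ := h.eq_zero_of_pair regrouped
  exact ⟨by simpa using hs, rfl⟩

section SixthRoot

variable {R M : Type*} [CommRing R] [AddCommGroup M] [Module R M] {ω : R}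

theorem span_int_eq_of_sq_eq_sub_one (hω : ω ^ 2 = ω - 1) (e₁ e₂ : M) :
    span ℤ {e₁, ω • e₁ + e₂, (1 + ω) • e₂, (2 : R) • e₂} =
      span ℤ {e₁, (2 * ω) • e₁, ω • e₁ + e₂, ω • (ω • e₁ + e₂)} := by
  have one_add_smul : (1 + ω) • e₂ =
      e₁ - (2 * ω) • e₁ + (ω • e₁ + e₂) + ω • (ω • e₁ + e₂) := by
    linear_combination (norm := module) -hω • e₁
  have two_smul_eq : (2 : R) • e₂ = (2 : ℤ) • (ω • e₁ + e₂) - (2 * ω) • e₁ := by module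
  rw [one_add_smul, two_smul_eq, span_sub_add_add_smul_sub]

theorem stmt7_general (hω : ω ^ 2 = ω - 1) {e₁ e₂ : M} (he : LinearIndependent R ![e₁, e₂]) :
    (span ℤ {e₁, ω • e₁ + e₂, (1 + ω) • e₂, (2 : R) • e₂} : Set M) =
        span ℤ {e₁, (2 * ω) • e₁, ω • e₁ + e₂, ω • (ω • e₁ + e₂)} ∧
      (span ℤ {e₁, ω • e₁ + e₂, (1 + ω) • e₂, (2 : R) • e₂} : Set M) =
        {v | ∃ γ ∈ span ℤ {1, 2 * ω}, ∃ δ ∈ span ℤ {1, ω}, v = γ • e₁ + δ • (ω • e₁ + e₂)} ∧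
      ∀ γ γ' δ δ' : R, γ • e₁ + δ • (ω • e₁ + e₂) = γ' • e₁ + δ' • (ω • e₁ + e₂) →
        γ = γ' ∧ δ = δ' := by
  rw [← coe_span_int_smul_quadruple, span_int_eq_of_sq_eq_sub_one hω]
  exact ⟨rfl, rfl, fun _ _ _ _ ↦ (linearIndependent_pair_smul_add he ω).eq_of_pair⟩

end SixthRoot

theorem ζ_sq : ζ ^ 2 = ζ - 1 := by
  have sqrt_three_sq : (Real.sqrt 3 : ℂ) ^ 2 = 3 := by
    exact_mod_cast Real.sq_sqrt (by norm_num : (0 : ℝ) ≤ 3)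
  unfold ζ
  linear_combination (Complex.I ^ 2 / 4) * sqrt_three_sq + (3 / 4) * Complex.I_sq

theorem linearIndependent_one_zero_zero_one (R : Type*) [Semiring R] :
    LinearIndependent R ![((1 : R), (0 : R)), (0, 1)] := by
  convert (Module.Basis.finTwoProd R).linearIndependent using 1
  ext i <;> fin_cases i <;> simp

theorem ΛA_eq_span : ΛA =
    span ℤ {((1 : ℂ), (0 : ℂ)), ζ • (1, 0) + (0, 1), (1 + ζ) • (0, 1), (2 : ℂ) • (0, 1)} := by
  simp [ΛA, coe_span_int_quadruple ℂ]

theorem Γ2ζ_eq_span : Γ2ζ = span ℤ {1, 2 * ζ} := (coe_span_int_one_pair (2 * ζ)).symm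

theorem Γζ_eq_span : Γζ = span ℤ {1, ζ} := (coe_span_int_one_pair ζ).symm

/-- Λ_A equals the ℤ-span of {(1,0),(2ζ,0),(ζ,1),(ζ²,ζ)}, i.e.
Λ_A = Γ_{2ζ}·(1,0) ⊕ Γ_ζ·(ζ,1) (the sum being direct). -/
theorem stmt7 :
    (ΛA = {v | ∃ a b c d : ℤ, v = (a : ℂ) • ((1 : ℂ), (0 : ℂ))
        + (b : ℂ) • (2 * ζ, (0 : ℂ)) + (c : ℂ) • (ζ, (1 : ℂ))
        + (d : ℂ) • (ζ ^ 2, ζ)}) ∧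
    (ΛA = {v | ∃ γ ∈ Γ2ζ, ∃ δ ∈ Γζ, v = γ • ((1 : ℂ), (0 : ℂ)) + δ • (ζ, (1 : ℂ))}) ∧
    (∀ γ ∈ Γ2ζ, ∀ γ' ∈ Γ2ζ, ∀ δ ∈ Γζ, ∀ δ' ∈ Γζ,
      γ • ((1 : ℂ), (0 : ℂ)) + δ • (ζ, (1 : ℂ))
        = γ' • ((1 : ℂ), (0 : ℂ)) + δ' • (ζ, (1 : ℂ)) → γ = γ' ∧ δ = δ') := by
  obtain ⟨span_eq, sum_eq, direct⟩ :=
    stmt7_general ζ_sq (linearIndependent_one_zero_zero_one ℂ)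
  rw [← ΛA_eq_span] at span_eq sum_eq
  refine ⟨?_, ?_, fun γ _ γ' _ δ _ δ' _ h ↦ direct γ γ' δ δ' (by simpa using h)⟩
  · simpa [coe_span_int_quadruple ℂ, sq] using span_eq
  · simpa [Γ2ζ_eq_span, Γζ_eq_span] using sum_eq
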